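/- Let λ be a partition of r whose conjugate is μ = (μ_1, μ_2) (so λ has exactly two columns, of lengths μ_1 ≥ μ_2), and let k be a positive integer with k ≤ μ_2. Then M^λ / GR^λ(k) ≅ S^λ as 𝔖_r-modules if and only if μ_1 > k, or μ_1 = μ_2 = k = 1. -/

import Mathlib

set_option synthInstance.maxHeartbeats 1000000
set_option maxSynthPendingDepth 3
set_option maxHeartbeats 1000000

noncomputable section

namespace Specht

variable (K : Type) [Field K] [CharZero K]
variable {L : ℕ} (μ : Fin L → ℕ) (r : ℕ)

/-- The cells of the Young diagram of `λ`, where `μ = λ'` records the column lengths: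
`⟨c, j⟩` is the cell in column `c` and row `j` (`0`-indexed). -/
abbrev Cell : Type := Σ c : Fin L, Fin (μ c)

/-- Young tableaux of shape `λ`: bijective fillings of the diagram of `λ` by `{1, …, r}`. -/
abbrev Tab : Type := Cell μ ≃ Fin r

/-- The free vector space on the set of Young tableaux of shape `λ`. -/
abbrev FreeTab : Type := Tab μ r →₀ K

/-- The relations `T + S = 0`, for `S` obtained from `T` by a transposition of two entries
in the same column. -/
def colRel : Submodule K (FreeTab K μ r) :=
  Submodule.span K
    {x | ∃ (T : Tab μ r) (c : Fin L) (j₁ j₂ : Fin (μ c)), j₁ ≠ j₂ ∧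
      x = Finsupp.single T 1 +
        Finsupp.single ((Equiv.swap (⟨c, j₁⟩ : Cell μ) ⟨c, j₂⟩).trans T) 1}

/-- The module `M^λ` spanned by column tabloids. -/
abbrev MLam : Type := FreeTab K μ r ⧸ colRel K μ r

/-- The column tabloid of a tableau. -/
def tabloid (T : Tab μ r) : MLam K μ r :=
  Submodule.Quotient.mk (Finsupp.single T 1)

/-- `ρ` is the action of the symmetric group `𝔖_r` on `M^λ` by relabelling entries. -/
def IsTabAction (ρ : Equiv.Perm (Fin r) → (MLam K μ r →ₗ[K] MLam K μ r)) : Prop :=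
  ∀ (σ : Equiv.Perm (Fin r)) (T : Tab μ r), ρ σ (tabloid K μ r T) = tabloid K μ r (T.trans σ)

/-- The permutation of the cells exchanging the top `k` cells of column `c+1` with
the `k` cells of column `c` recorded by `A`, in increasing row order. -/
def exchPerm (c : ℕ) (hc : c + 1 < L) (k : ℕ) (hk : k ≤ μ ⟨c+1, hc⟩)
    (A : Finset (Fin (μ ⟨c, by omega⟩))) (hA : A.card = k) : Equiv.Perm (Cell μ) :=
  (List.ofFn (fun i : Fin k =>
    Equiv.swap (⟨⟨c, by omega⟩, ((A.orderIsoOfFin hA i : A) : Fin (μ ⟨c, by omega⟩))⟩ : Cell μ)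
      ⟨⟨c+1, hc⟩, ⟨i.val, by omega⟩⟩)).prod

/-- The Garnir element `g^T_{c,k} = T̄ - Σ S̄ ∈ M^λ`, the sum being over all tableaux `S`
obtained from `T` by exchanging the top `k` entries of column `c+1` with `k` entries of
column `c`, maintaining the vertical order of each exchanged set. -/
def garnirElt (T : Tab μ r) (c : ℕ) (hc : c + 1 < L) (k : ℕ) (hk : k ≤ μ ⟨c+1, hc⟩) :
    MLam K μ r :=
  tabloid K μ r T -
    ∑ A ∈ (Finset.powersetCard k (Finset.univ : Finset (Fin (μ ⟨c, by omega⟩)))).attach,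
      tabloid K μ r
        ((exchPerm μ c hc k hk A.1 (Finset.mem_powersetCard.mp A.2).2).trans T)

/-- The permutation of the cells exchanging the `k` cells of column `c+1` recorded by `B`
with the `k` cells of column `c` recorded by `A`, in increasing row order. -/
def exch2Perm (c : ℕ) (hc : c + 1 < L)  (k : ℕ)
    (A : Finset (Fin (μ ⟨c, by omega⟩))) (hA : A.card = k)
    (B : Finset (Fin (μ ⟨c+1, hc⟩))) (hB : B.card = k) : Equiv.Perm (Cell μ) :=
  (List.ofFn (fun i : Fin k =>
    Equiv.swap (⟨⟨c, by omega⟩, ((A.orderIsoOfFin hA i : A) : Fin (μ ⟨c, by omega⟩))⟩ : Cell μ)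
      ⟨⟨c+1, hc⟩, ((B.orderIsoOfFin hB i : B) : Fin (μ ⟨c+1, hc⟩))⟩)).prod

/-- The symmetrized Garnir element `r^T_{c,k} = C(μ_{c+1},k)·T̄ - Σ S̄ ∈ M^λ`, the sum being
over all tableaux `S` obtained from `T` by exchanging any `k` entries of column `c+1` with
any `k` entries of column `c`, maintaining the vertical order of each exchanged set. -/
def sgrElt (T : Tab μ r) (c : ℕ) (hc : c + 1 < L) (k : ℕ) : MLam K μ r :=
  ((μ ⟨c+1, hc⟩).choose k : K) • tabloid K μ r T -
    ∑ A ∈ (Finset.powersetCard k (Finset.univ : Finset (Fin (μ ⟨c, by omega⟩)))).attach,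
      ∑ B ∈ (Finset.powersetCard k (Finset.univ : Finset (Fin (μ ⟨c+1, hc⟩)))).attach,
        tabloid K μ r
          ((exch2Perm μ c hc k A.1 (Finset.mem_powersetCard.mp A.2).2
              B.1 (Finset.mem_powersetCard.mp B.2).2).trans T)

/-- The subspace `G^λ ⊆ M^λ` spanned by all Garnir relations. -/
def garnirSub : Submodule K (MLam K μ r) :=
  Submodule.span K
    {x | ∃ (T : Tab μ r) (c : ℕ) (hc : c + 1 < L) (k : ℕ) (hk : k ≤ μ ⟨c+1, hc⟩),
      x = garnirElt K μ r T c hc k hk}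

/-- The subspace `GR^λ(k_1, …, k_{λ_1 - 1}) ⊆ M^λ` spanned by the Garnir relations
`g^T_{c,k_c}`. -/
def grSub (kk : ℕ → ℕ) : Submodule K (MLam K μ r) :=
  Submodule.span K
    {x | ∃ (T : Tab μ r) (c : ℕ) (hc : c + 1 < L) (hk : kk c ≤ μ ⟨c+1, hc⟩),
      x = garnirElt K μ r T c hc (kk c) hk}

/-- The subspace `SGR^λ(k_1, …, k_{λ_1 - 1}) ⊆ M^λ` spanned by the symmetrized Garnir
relations `r^T_{c,k_c}`. -/
def sgrSub (kk : ℕ → ℕ) : Submodule K (MLam K μ r) :=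
  Submodule.span K
    {x | ∃ (T : Tab μ r) (c : ℕ) (hc : c + 1 < L), x = sgrElt K μ r T c hc (kk c)}

/-- Quotients `M₁ ⧸ N₁` and `M₂ ⧸ N₂` are isomorphic compatibly with the given actions. -/
def IsQuotIso {G' : Type} {M₁ M₂ : Type} [AddCommGroup M₁] [Module K M₁]
    [AddCommGroup M₂] [Module K M₂]
    (N₁ : Submodule K M₁) (N₂ : Submodule K M₂)
    (ρ₁ : G' → M₁ →ₗ[K] M₁) (ρ₂ : G' → M₂ →ₗ[K] M₂) : Prop :=
  ∃ e : (M₁ ⧸ N₁) ≃ₗ[K] (M₂ ⧸ N₂),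
    ∀ (g : G') (x : M₁) (y : M₂),
      e (Submodule.Quotient.mk x) = Submodule.Quotient.mk y →
      e (Submodule.Quotient.mk (ρ₁ g x)) = Submodule.Quotient.mk (ρ₂ g y)

end Specht

namespace Specht

/-!
Up to sign, a column tabloid with two columns depends only on the set of entries of its second
column, so a linear map on `M^λ` amounts to a function `f` on the `μ₂`-subsets of `{1, …, r}`. Fix
the set `Z` of those entries of the second column that are not exchanged. The Garnir relations of
size `k` then say that `A ↦ f (Z ∪ A)`, on the `k`-subsets of the complement of `Z`, is zero or an
eigenvector of the Kneser graph for the eigenvalue `(-1) ^ k`.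

Let `u C` be the sum of such an eigenvector over the `k`-subsets containing `C`, where `#C < k`. By
double counting, `u C` is `± (μ₁ - #C).choose (k - #C)` times the sum over the `k`-subsets disjoint
from `C`, and by inclusion–exclusion and induction on `#C` the latter sum is `± u C`. The resulting
factor differs from `1` if `k = 1` or `k < μ₁`, so `u C = 0`. Hence `f` is harmonic, a condition in
which `k` no longer occurs, and by inclusion–exclusion a harmonic function satisfies the Garnir
relations of every size.

If `μ₁ = μ₂ = k ≥ 2`, the relations of size `k` only link a set to its complement, and a function
supported on a set and its complement can satisfy them without satisfying those of size `1`.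
Finally, as `GR^λ(k) ≤ G^λ`, comparing dimensions shows that the quotients are isomorphic only if
the two submodules are equal.
-/

section Kneser

open Finset

variable {α V : Type*} [DecidableEq α] [AddCommGroup V] {g : Finset α → V} {S B C : Finset α}
  {k : ℕ}

/-- The sum of `g` over the `k`-subsets of `S` that contain `C`. -/
def upSum (g : Finset α → V) (S : Finset α) (k : ℕ) (C : Finset α) : V :=
  ∑ A ∈ powersetCard k S with C ⊆ A, g A

/-- The restriction of `g` to the `k`-subsets of `S` is zero or an eigenvector, with eigenvalue
`(-1) ^ k`, of the Kneser graph, in which disjoint subsets are adjacent. -/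
def IsKneserEigen (g : Finset α → V) (S : Finset α) (k : ℕ) : Prop :=
  ∀ B ∈ powersetCard k S, g B = (-1 : ℤ) ^ k • ∑ A ∈ powersetCard k (S \ B), g A

/-- The restriction of `g` to the `k`-subsets of `S` is harmonic in the sense of the Johnson
scheme: it lies in the kernel of the down map to functions on the `(k - 1)`-subsets. -/
def IsHarmonic (g : Finset α → V) (S : Finset α) (k : ℕ) : Prop :=
  ∀ C ⊆ S, #C + 1 = k → ∑ x ∈ S \ C, g (insert x C) = 0

theorem upSum_of_mem_powersetCard (hC : C ∈ powersetCard k S) : upSum g S k C = g C := by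
  have hfilter : {A ∈ powersetCard k S | C ⊆ A} = {C} := by
    ext A
    simp only [mem_filter, mem_singleton]
    constructor
    · rintro ⟨hA, hCA⟩
      exact (eq_of_subset_of_card_le hCA
        ((mem_powersetCard.1 hA).2.trans (mem_powersetCard.1 hC).2.symm).le).symm
    · rintro rfl
      exact ⟨hC, Subset.rfl⟩
  rw [upSum, hfilter, sum_singleton]

theorem sum_upSum_insert (g : Finset α → V) (S : Finset α) (k : ℕ) (C : Finset α) :
    ∑ x ∈ S \ C, upSum g S k (insert x C) = (k - #C) • upSum g S k C := by
  simp only [upSum, smul_sum]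
  rw [sum_comm' (t' := {A ∈ powersetCard k S | C ⊆ A}) (s' := fun A => A \ C)]
  · refine sum_congr rfl fun A hA => ?_
    simp only [mem_filter, mem_powersetCard] at hA
    rw [sum_const, card_sdiff_of_subset hA.2, hA.1.2]
  · intro x A
    simp only [mem_filter, mem_powersetCard, mem_sdiff, insert_subset_iff]
    exact ⟨by tauto, fun ⟨⟨hxA, hxC⟩, ⟨hAS, hA⟩, hCA⟩ => ⟨⟨hAS hxA, hxC⟩, ⟨hAS, hA⟩, hxA, hCA⟩⟩

theorem sum_insert_eq_upSum (hCS : C ⊆ S) (hCk : #C + 1 = k) :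
    ∑ x ∈ S \ C, g (insert x C) = upSum g S k C := calc
  ∑ x ∈ S \ C, g (insert x C) = ∑ x ∈ S \ C, upSum g S k (insert x C) :=
    sum_congr rfl fun x hx => by
      obtain ⟨hxS, hxC⟩ := mem_sdiff.1 hx
      rw [upSum_of_mem_powersetCard (mem_powersetCard.2
        ⟨insert_subset hxS hCS, (card_insert_of_notMem hxC).trans hCk⟩)]
  _ = upSum g S k C := by rw [sum_upSum_insert, ← hCk, Nat.add_sub_cancel_left, one_smul]

theorem sum_powersetCard_sdiff (g : Finset α → V) (S : Finset α) (k : ℕ) (B : Finset α) :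
    ∑ A ∈ powersetCard k (S \ B), g A = ∑ C ∈ B.powerset, (-1 : ℤ) ^ #C • upSum g S k C := by
  simp only [upSum, smul_sum]
  rw [sum_comm' (t' := powersetCard k S) (s' := fun A => (A ∩ B).powerset)]
  · simp only [← sum_smul, sum_powerset_neg_one_pow_card, ite_smul, one_smul, zero_smul]
    rw [← sum_filter]
    refine sum_congr ?_ fun _ _ => rfl
    ext A
    simp only [mem_filter, mem_powersetCard, subset_sdiff, disjoint_iff_inter_eq_empty]
    tauto
  · intro C A
    simp only [mem_filter, mem_powerset, subset_inter_iff]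
    tauto

theorem sum_powersetCard_sdiff_eq_upSum (h : ∀ C ⊂ B, upSum g S k C = 0) :
    ∑ A ∈ powersetCard k (S \ B), g A = (-1 : ℤ) ^ #B • upSum g S k B := by
  rw [sum_powersetCard_sdiff]
  refine sum_eq_single_of_mem B (mem_powerset_self B) fun C hC hne => ?_
  rw [h C ((mem_powerset.1 hC).ssubset_of_ne hne), smul_zero]

theorem IsKneserEigen.upSum_eq_choose_smul (hg : IsKneserEigen g S k) (hCS : C ⊆ S)
    (hCk : #C ≤ k) :
    upSum g S k C =
      (-1 : ℤ) ^ k • (#S - k - #C).choose (k - #C) • ∑ A ∈ powersetCard k (S \ C), g A := by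
  have heigen : upSum g S k C = (-1 : ℤ) ^ k •
      ∑ B ∈ powersetCard k S with C ⊆ B, ∑ A ∈ powersetCard k (S \ B), g A := by
    rw [smul_sum]
    exact sum_congr rfl fun B hB => hg B (mem_filter.1 hB).1
  rw [heigen, sum_comm' (t' := powersetCard k (S \ C))
    (s' := fun A => {B ∈ powersetCard k (S \ A) | C ⊆ B})]
  · rw [smul_sum (r := Nat.choose _ _)]
    congr 1
    refine sum_congr rfl fun A hA => ?_
    obtain ⟨hA, hAk⟩ := mem_powersetCard.1 hA
    obtain ⟨hAS, hAC⟩ := subset_sdiff.1 hA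
    rw [sum_const, card_filter_powersetCard_subset C _ k (subset_sdiff.2 ⟨hCS, hAC.symm⟩) hCk,
      card_sdiff_of_subset hAS, hAk]
  · intro B A
    simp only [mem_filter, mem_powersetCard, subset_sdiff]
    constructor
    · rintro ⟨⟨⟨hBS, hB⟩, hCB⟩, ⟨hAS, hAB⟩, hA⟩
      exact ⟨⟨⟨⟨hBS, hAB.symm⟩, hB⟩, hCB⟩, ⟨hAS, hAB.mono_right hCB⟩, hA⟩
    · rintro ⟨⟨⟨⟨hBS, hBA⟩, hB⟩, hCB⟩, ⟨hAS, -⟩, hA⟩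
      exact ⟨⟨⟨hBS, hB⟩, hCB⟩, ⟨hAS, hBA.symm⟩, hA⟩

theorem neg_one_pow_mul_choose_ne_one {n j : ℕ} (hjk : j < k) (hk : k = 1 ∨ 2 * k < n) :
    (-1 : ℤ) ^ (k + j) * (n - k - j).choose (k - j) ≠ 1 := by
  rcases hk with rfl | hk
  · obtain rfl : j = 0 := by omega
    simp only [add_zero, pow_one, neg_mul, one_mul, ne_eq]
    omega
  · have hchoose : 1 < (n - k - j).choose (k - j) := calc
      1 < (k - j + 1).choose (k - j) := by rw [Nat.choose_succ_self_right]; omega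
      _ ≤ (n - k - j).choose (k - j) := Nat.choose_le_choose _ (by omega)
    rcases neg_one_pow_eq_or ℤ (k + j) with h | h <;> rw [h] <;> omega

variable [IsAddTorsionFree V]

theorem IsKneserEigen.upSum_eq_zero (hg : IsKneserEigen g S k) (hk : k = 1 ∨ 2 * k < #S)
    (hCS : C ⊆ S) (hCk : #C < k) : upSum g S k C = 0 := by
  induction C using Finset.strongInduction with
  | H C ih =>
    have hincl : ∑ A ∈ powersetCard k (S \ C), g A = (-1 : ℤ) ^ #C • upSum g S k C :=
      sum_powersetCard_sdiff_eq_upSum fun D hD =>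
        ih D hD (hD.1.trans hCS) ((card_lt_card hD).trans hCk)
    have heigen :
        ((-1 : ℤ) ^ (k + #C) * (#S - k - #C).choose (k - #C) - 1) • upSum g S k C = 0 := by
      rw [sub_smul, one_smul, sub_eq_zero]
      conv_rhs => rw [hg.upSum_eq_choose_smul hCS hCk.le, hincl]
      rw [← natCast_zsmul, smul_smul, smul_smul]
      ring_nf
    exact (smul_eq_zero.1 heigen).resolve_left
      (sub_ne_zero.2 (neg_one_pow_mul_choose_ne_one hCk hk))

theorem IsKneserEigen.isHarmonic (hg : IsKneserEigen g S k) (hk : k = 1 ∨ 2 * k < #S) :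
    IsHarmonic g S k := fun C hCS hCk => by
  rw [sum_insert_eq_upSum hCS hCk, hg.upSum_eq_zero hk hCS (by omega)]

theorem IsHarmonic.upSum_eq_zero (hg : IsHarmonic g S k) (hCS : C ⊆ S) (hCk : #C < k) :
    upSum g S k C = 0 := by
  obtain ⟨m, hm⟩ := Nat.exists_eq_add_of_lt hCk
  induction m generalizing C with
  | zero => rw [← sum_insert_eq_upSum hCS hm.symm, hg C hCS hm.symm]
  | succ m ih =>
    have hsum : ∑ x ∈ S \ C, upSum g S k (insert x C) = 0 := sum_eq_zero fun x hx => by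
      obtain ⟨hxS, hxC⟩ := mem_sdiff.1 hx
      have hcard : #(insert x C) = #C + 1 := card_insert_of_notMem hxC
      exact ih (insert_subset hxS hCS) (by omega) (by omega)
    rw [sum_upSum_insert] at hsum
    exact (smul_eq_zero.1 hsum).resolve_left (by omega)

theorem IsHarmonic.isKneserEigen (hg : IsHarmonic g S k) : IsKneserEigen g S k := by
  intro B hB
  obtain ⟨hBS, hBk⟩ := mem_powersetCard.1 hB
  rw [sum_powersetCard_sdiff_eq_upSum fun C hC =>
      hg.upSum_eq_zero (hC.1.trans hBS) (hBk ▸ card_lt_card hC),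
    upSum_of_mem_powersetCard hB, hBk, smul_smul, ← mul_pow, neg_one_mul, neg_neg, one_pow,
    one_smul]

end Kneser

section GarnirFunctions

open Finset

variable {α V : Type*} [Fintype α] [DecidableEq α] [AddCommGroup V] {f : Finset α → V}
  {a b k : ℕ}

/-- The Garnir relations of size `k` for a function `f` of the set of entries of the second column,
which has length `b`: the entries `Z` stay in the second column, and the other `k` are exchanged
with entries of the first column. The sign comes from ordering the entries of a tableau. -/
def IsGarnir (f : Finset α → V) (b k : ℕ) : Prop :=
  ∀ Z : Finset α, #Z + k = b → IsKneserEigen (fun A => f (Z ∪ A)) Zᶜ k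

theorem IsHarmonic.link (hf : IsHarmonic f univ b) {Z : Finset α} {l : ℕ} (hZ : #Z + l = b) :
    IsHarmonic (fun A => f (Z ∪ A)) Zᶜ l := by
  intro C hCZ hC
  have hdisj : Disjoint Z C := disjoint_compl_right.mono_right hCZ
  have hsum := hf (Z ∪ C) (subset_univ _) (by rw [card_union_of_disjoint hdisj]; omega)
  simpa only [union_insert, compl_eq_univ_sdiff, sdiff_sdiff_left, sup_eq_union] using hsum

theorem isHarmonic_of_forall_link (hk1 : 1 ≤ k) (hkb : k ≤ b)
    (hf : ∀ Z, #Z + k = b → IsHarmonic (fun A => f (Z ∪ A)) Zᶜ k) : IsHarmonic f univ b := by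
  intro D _ hD
  obtain ⟨C, hCD, hC⟩ := exists_subset_card_eq (s := D) (n := k - 1) (by omega)
  have hZ : #(D \ C) = #D - #C := card_sdiff_of_subset hCD
  have hsum := hf (D \ C) (by omega) C (fun x hx => by simp [hx]) (by omega)
  simpa only [union_insert, compl_eq_univ_sdiff, sdiff_sdiff_left, sup_eq_union,
    sdiff_union_of_subset hCD] using hsum

theorem IsGarnir.of_isGarnir [IsAddTorsionFree V] (hα : Fintype.card α = a + b) (hk1 : 1 ≤ k)
    (hkb : k ≤ b) (hka : k = 1 ∨ k < a) (hf : IsGarnir f b k) (l : ℕ) : IsGarnir f b l := by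
  have hharmonic : IsHarmonic f univ b := isHarmonic_of_forall_link hk1 hkb fun Z hZ =>
    (hf Z hZ).isHarmonic (by rw [card_compl, hα]; omega)
  exact fun Z hZ => (hharmonic.link hZ).isKneserEigen

theorem isGarnir_self_iff_of_card_eq (hα : Fintype.card α = k + k) :
    IsGarnir f k k ↔ ∀ B, #B = k → f B = (-1 : ℤ) ^ k • f Bᶜ := by
  have hsum : ∀ B, #B = k → ∑ A ∈ powersetCard k (univ \ B), f A = f Bᶜ := fun B hB => by
    rw [← compl_eq_univ_sdiff, show k = #Bᶜ by rw [card_compl]; omega, powersetCard_self,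
      sum_singleton]
  constructor
  · intro hf B hB
    rw [← hsum B hB]
    simpa using hf ∅ (by simp) B (by simp [hB])
  · intro hf Z hZ B hB
    obtain rfl : Z = ∅ := card_eq_zero.1 (by omega)
    have hBk : #B = k := (mem_powersetCard.1 hB).2
    simpa [hsum B hBk] using hf B hBk

theorem exists_isGarnir_self_not_isGarnir_one [Nontrivial V] (hα : Fintype.card α = k + k)
    (hk : 2 ≤ k) : ∃ f : Finset α → V, IsGarnir f k k ∧ ¬ IsGarnir f k 1 := by
  obtain ⟨v, hv⟩ := exists_ne (0 : V)
  obtain ⟨Y, -, hY⟩ := exists_subset_card_eq (s := (univ : Finset α)) (n := k)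
    (by rw [card_univ]; omega)
  obtain ⟨y, hy⟩ := card_pos.1 (show 0 < #Y by omega)
  have hYy : #(Y.erase y) + 1 = k := by rw [card_erase_add_one hy, hY]
  obtain ⟨z, hz⟩ := card_pos.1 (show 0 < #(Y.erase y) by omega)
  have hzY : z ∈ Y := mem_of_mem_erase hz
  have hYYc : Y ≠ Yᶜ := fun h => mem_compl.1 (h ▸ hzY) hzY
  obtain ⟨f, hfY, hfYc, hf0⟩ : ∃ f : Finset α → V,
      f Y = v ∧ f Yᶜ = (-1 : ℤ) ^ k • v ∧ ∀ A, A ≠ Y → A ≠ Yᶜ → f A = 0 :=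
    ⟨Function.update (Pi.single Y v) Yᶜ ((-1 : ℤ) ^ k • v), by simp [hYYc], by simp,
      fun A hA hAc => by simp [hA, hAc]⟩
  refine ⟨f, (isGarnir_self_iff_of_card_eq hα).2 fun B _ => ?_, fun hf => hv ?_⟩
  · by_cases hBY : B = Y
    · rw [hBY, hfY, hfYc, smul_smul, ← mul_pow, neg_one_mul, neg_neg, one_pow, one_smul]
    by_cases hBYc : B = Yᶜ
    · rw [hBYc, compl_compl, hfY, hfYc]
    · rw [hf0 B hBY hBYc, hf0 Bᶜ (fun h => hBYc (compl_eq_comm.1 h).symm)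
        (fun h => hBY (compl_injective h)), smul_zero]
  · have heigen : f (Y.erase y ∪ {y}) = _ := hf (Y.erase y) hYy {y} (by simp)
    rw [union_comm, ← insert_eq, insert_erase hy, hfY] at heigen
    rw [heigen, sum_eq_zero, smul_zero]
    intro A hA
    obtain ⟨hA, hA1⟩ := mem_powersetCard.1 hA
    obtain ⟨x, rfl⟩ := card_eq_one.1 hA1
    have hxY : x ∉ Y := by
      simp only [singleton_subset_iff, mem_sdiff, mem_compl, mem_erase, mem_singleton] at hA
      tauto
    refine hf0 _ (fun h => hxY ?_) (fun h => mem_compl.1 (h ▸ mem_union_left _ hz) hzY)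
    exact h ▸ mem_union_right _ (mem_singleton_self x)

end GarnirFunctions

section Tableaux

open Finset Equiv

theorem mem_closure_swap_of_forall_apply_eq {α β : Type*} [Finite α] [DecidableEq α] {c : α → β}
    {π : Perm α} (hπ : ∀ x, c (π x) = c x) :
    π ∈ Subgroup.closure {σ | ∃ x y, x ≠ y ∧ c x = c y ∧ σ = swap x y} := by
  rw [mem_closure_isSwap (by rintro _ ⟨x, y, hxy, -, rfl⟩; exact ⟨x, y, hxy, rfl⟩)]
  refine ⟨Set.toFinite _, fun x => ?_⟩
  by_cases hx : x = π x
  · rw [← hx]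
    exact MulAction.mem_orbit_self x
  · exact ⟨⟨swap x (π x), Subgroup.subset_closure ⟨x, π x, hx, (hπ x).symm, rfl⟩⟩,
      swap_apply_left _ _⟩

theorem prod_ofFn_swap_apply_of_forall_ne {α : Type*} [DecidableEq α] {n : ℕ} {x y : Fin n → α}
    {z : α} (hx : ∀ i, z ≠ x i) (hy : ∀ i, z ≠ y i) :
    (List.ofFn fun i => swap (x i) (y i)).prod z = z :=
  MulAction.mem_stabilizer_iff.1 <| list_prod_mem (S := MulAction.stabilizer (Perm α) z) <|
    List.forall_mem_ofFn_iff.2 fun i =>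
      MulAction.mem_stabilizer_iff.2 (swap_apply_of_ne_of_ne (hx i) (hy i))

theorem prod_ofFn_swap_apply_right {α : Type*} [DecidableEq α] {n : ℕ} {x y : Fin n → α}
    (hx : Function.Injective x) (hy : Function.Injective y) (hxy : ∀ i j, x i ≠ y j) (i : Fin n) :
    (List.ofFn fun i => swap (x i) (y i)).prod (y i) = x i := by
  induction n with
  | zero => exact i.elim0
  | succ n ih =>
    rw [List.ofFn_succ, List.prod_cons, Perm.mul_apply]
    cases i using Fin.cases with
    | zero =>
      rw [prod_ofFn_swap_apply_of_forall_ne (fun i => (hxy _ _).symm)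
        (fun i => hy.ne (Fin.succ_ne_zero i).symm), swap_apply_right]
    | succ i =>
      rw [ih (x := fun i => x i.succ) (y := fun i => y i.succ)
        (hx.comp (Fin.succ_injective n)) (hy.comp (Fin.succ_injective n)) fun _ _ => hxy _ _,
        swap_apply_of_ne_of_ne (hx.ne (Fin.succ_ne_zero i)) (hxy _ _)]

theorem exists_perm_map_eq_and_map_eq {α : Type*} [Finite α] {s t s' t' : Finset α}
    (hst : Disjoint s t) (hst' : Disjoint s' t') (hs : #s = #s') (ht : #t = #t') :
    ∃ σ : Perm α, s.map σ.toEmbedding = s' ∧ t.map σ.toEmbedding = t' := by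
  obtain ⟨σ, hσ⟩ := Perm.exists_extending_pair
    (Sum.elim (Subtype.val : s → α) (Subtype.val : t → α))
    (Sum.elim (fun x => (equivOfCardEq hs x : α)) (fun x => (equivOfCardEq ht x : α)))
    (Function.Injective.sumElim Subtype.val_injective Subtype.val_injective
      fun a b => hst.forall_ne_finset a.2 b.2)
    (Function.Injective.sumElim (Subtype.val_injective.comp (Equiv.injective _))
      (Subtype.val_injective.comp (Equiv.injective _))
      fun a b => hst'.forall_ne_finset (Subtype.prop _) (Subtype.prop _))
  refine ⟨σ, eq_of_subset_of_card_le (fun y hy => ?_) (by rw [card_map, hs]),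
    eq_of_subset_of_card_le (fun y hy => ?_) (by rw [card_map, ht])⟩
  · obtain ⟨x, hx, rfl⟩ := mem_map.1 hy
    exact (hσ (.inl ⟨x, hx⟩)).symm ▸ Subtype.prop _
  · obtain ⟨x, hx, rfl⟩ := mem_map.1 hy
    exact (hσ (.inr ⟨x, hx⟩)).symm ▸ Subtype.prop _

variable {L : ℕ} {μ : Fin L → ℕ} {r : ℕ} {T T' : Tab μ r} {c : Fin L} {k : ℕ}

/-- The entries of column `c` of a tableau, read from top to bottom. -/
def colEmb (T : Tab μ r) (c : Fin L) : Fin (μ c) ↪ Fin r :=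
  (Function.Embedding.sigmaMk c).trans T.toEmbedding

/-- The set of entries of column `c` of a tableau. -/
def colEntries (T : Tab μ r) (c : Fin L) : Finset (Fin r) :=
  univ.map (colEmb T c)

/-- The set of the top `k` entries of column `c` of a tableau. -/
def topEntries (T : Tab μ r) (c : Fin L) (k : ℕ) : Finset (Fin r) :=
  ({j | j.val < k} : Finset (Fin (μ c))).map (colEmb T c)

theorem apply_mem_colEntries_iff {x : Cell μ} : T x ∈ colEntries T c ↔ x.1 = c := by
  simp only [colEntries, mem_map, mem_univ, true_and]
  constructor
  · rintro ⟨j, hj⟩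
    rw [← T.injective hj]
    rfl
  · obtain ⟨c, j⟩ := x
    rintro rfl
    exact ⟨j, rfl⟩

theorem card_colEntries : #(colEntries T c) = μ c := by
  rw [colEntries, card_map, card_univ, Fintype.card_fin]

theorem topEntries_subset_colEntries : topEntries T c k ⊆ colEntries T c :=
  map_subset_map.2 (subset_univ _)

theorem card_topEntries (hk : k ≤ μ c) : #(topEntries T c k) = k := by
  rw [topEntries, card_map, Fin.card_filter_val_lt, min_eq_right hk]

theorem card_colEntries_sdiff_topEntries_add (hk : k ≤ μ c) :
    #(colEntries T c \ topEntries T c k) + k = μ c := by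
  rw [card_sdiff_of_subset topEntries_subset_colEntries, card_topEntries hk, card_colEntries,
    Nat.sub_add_cancel hk]

theorem colEntries_trans_of_forall_fst_eq {π : Perm (Cell μ)} (hπ : ∀ x, (π x).1 = x.1) :
    colEntries (π.trans T) c = colEntries T c := by
  ext y
  obtain ⟨x, rfl⟩ := (π.trans T).surjective y
  rw [apply_mem_colEntries_iff, trans_apply, apply_mem_colEntries_iff, hπ]

theorem disjoint_colEntries {d : Fin L} (hcd : c ≠ d) :
    Disjoint (colEntries T c) (colEntries T d) := by
  rw [disjoint_left]
  intro y hc hd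
  obtain ⟨x, rfl⟩ := T.surjective y
  exact hcd ((apply_mem_colEntries_iff.1 hc).symm.trans (apply_mem_colEntries_iff.1 hd))

theorem exists_tab_colEntries_eq_union_and_topEntries_eq (hr : r = ∑ c, μ c)
    {Z B : Finset (Fin r)} (hZB : Disjoint Z B) (hZ : #Z + k = μ c) (hB : #B = k) :
    ∃ T : Tab μ r, colEntries T c = Z ∪ B ∧ topEntries T c k = B := by
  let T₁ : Tab μ r := Fintype.equivFinOfCardEq (by simp [hr])
  have hcard := card_colEntries_sdiff_topEntries_add (T := T₁) (show k ≤ μ c by omega)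
  obtain ⟨σ, hσZ, hσB⟩ := exists_perm_map_eq_and_map_eq
    (s := colEntries T₁ c \ topEntries T₁ c k) (t := topEntries T₁ c k) sdiff_disjoint hZB
    (by omega) ((card_topEntries (by omega)).trans hB.symm)
  have hcol : colEntries (T₁.trans σ) c = (colEntries T₁ c).map σ.toEmbedding :=
    (map_map (colEmb T₁ c) σ.toEmbedding univ).symm
  refine ⟨T₁.trans σ, ?_, (map_map (colEmb T₁ c) σ.toEmbedding _).symm.trans hσB⟩
  rw [hcol, ← hσZ, ← hσB, ← map_union, sdiff_union_of_subset topEntries_subset_colEntries]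

section ExchPerm

variable {c : ℕ} {hc : c + 1 < L} {hk : k ≤ μ ⟨c + 1, hc⟩} {A : Finset (Fin (μ ⟨c, by omega⟩))}
  {hA : #A = k}

theorem sign_exchPerm : Perm.sign (exchPerm μ c hc k hk A hA) = (-1) ^ k := by
  rw [exchPerm, map_list_prod, List.map_ofFn, List.prod_ofFn]
  simp

theorem exchPerm_apply_of_lt (i : Fin k) :
    exchPerm μ c hc k hk A hA ⟨⟨c + 1, hc⟩, ⟨i, i.2.trans_le hk⟩⟩ =
      ⟨⟨c, by omega⟩, A.orderIsoOfFin hA i⟩ :=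
  prod_ofFn_swap_apply_right
    (x := fun i : Fin k => (⟨⟨c, by omega⟩, A.orderIsoOfFin hA i⟩ : Cell μ))
    (y := fun i : Fin k => (⟨⟨c + 1, hc⟩, ⟨i, i.2.trans_le hk⟩⟩ : Cell μ))
    (fun i j hij => by simpa using hij) (fun i j hij => by simpa [Fin.ext_iff] using hij)
    (fun i j => by simp) i

theorem exchPerm_apply_of_le {j : Fin (μ ⟨c + 1, hc⟩)} (hj : k ≤ j) :
    exchPerm μ c hc k hk A hA ⟨⟨c + 1, hc⟩, j⟩ = ⟨⟨c + 1, hc⟩, j⟩ :=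
  prod_ofFn_swap_apply_of_forall_ne (fun i => by simp) fun i => by
    simp only [ne_eq, Sigma.mk.injEq, heq_eq_eq, true_and, Fin.ext_iff]
    omega

theorem colEntries_exchPerm_trans :
    colEntries ((exchPerm μ c hc k hk A hA).trans T) ⟨c + 1, hc⟩ =
      (colEntries T ⟨c + 1, hc⟩ \ topEntries T ⟨c + 1, hc⟩ k) ∪
        A.map (colEmb T ⟨c, by omega⟩) := by
  refine (eq_of_subset_of_card_le (union_subset (fun y hy => ?_) fun y hy => ?_) ?_).symm
  · obtain ⟨hy, hytop⟩ := mem_sdiff.1 hy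
    obtain ⟨j, -, rfl⟩ := mem_map.1 hy
    have hj : k ≤ j := not_lt.1 fun h => hytop (mem_map_of_mem _ (by simpa using h))
    exact mem_map.2 ⟨j, mem_univ j, congrArg T (exchPerm_apply_of_le hj)⟩
  · obtain ⟨a, ha, rfl⟩ := mem_map.1 hy
    obtain ⟨i, hi⟩ := (A.orderIsoOfFin hA).surjective ⟨a, ha⟩
    refine mem_map.2 ⟨⟨i, i.2.trans_le hk⟩, mem_univ _, congrArg T ?_⟩
    exact (exchPerm_apply_of_lt i).trans (by rw [hi]; rfl)
  · have hdisj : Disjoint (colEntries T ⟨c + 1, hc⟩ \ topEntries T ⟨c + 1, hc⟩ k)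
        (A.map (colEmb T ⟨c, by omega⟩)) :=
      (disjoint_colEntries (by simp)).mono sdiff_subset (map_subset_map.2 (subset_univ A))
    rw [card_union_of_disjoint hdisj, card_map, hA, card_colEntries,
      card_colEntries_sdiff_topEntries_add hk]

end ExchPerm

end Tableaux

section Tabloids

open Finset Equiv

variable {K : Type} [Field K] {L : ℕ} {μ : Fin L → ℕ} {r : ℕ}

theorem tabloid_swap_trans {x y : Cell μ} (hxy : x ≠ y) (hcol : x.1 = y.1) (T : Tab μ r) :
    tabloid K μ r ((swap x y).trans T) = -tabloid K μ r T := by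
  obtain ⟨c, i⟩ := x
  obtain ⟨d, j⟩ := y
  obtain rfl : c = d := hcol
  rw [eq_neg_iff_add_eq_zero, add_comm, tabloid, tabloid, ← Submodule.Quotient.mk_add,
    Submodule.Quotient.mk_eq_zero]
  exact Submodule.subset_span ⟨T, c, i, j, fun hij => hxy (by rw [hij]), rfl⟩

theorem tabloid_trans_of_forall_fst_eq {π : Perm (Cell μ)} (hπ : ∀ x, (π x).1 = x.1)
    (T : Tab μ r) : tabloid K μ r (π.trans T) = Perm.sign π • tabloid K μ r T := by
  have hmem := mem_closure_swap_of_forall_apply_eq hπ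
  clear hπ
  induction hmem using Subgroup.closure_induction generalizing T with
  | mem σ hσ =>
    obtain ⟨x, y, hxy, hcol, rfl⟩ := hσ
    rw [tabloid_swap_trans hxy hcol, Perm.sign_swap hxy, Units.neg_smul, one_smul]
  | one => rw [Perm.sign_one, one_smul]; rfl
  | mul σ τ _ _ hσ hτ =>
    rw [show (σ * τ).trans T = τ.trans (σ.trans T) from rfl, hτ, hσ, smul_smul,
      Perm.sign_mul, mul_comm]
  | inv σ _ hσ =>
    rw [map_inv, eq_inv_smul_iff, ← hσ, show σ.trans (σ⁻¹.trans T) = T by ext; simp]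

/-- The sign of a tableau `T` with respect to a reference tableau `T₀`. -/
def tabSign (T₀ T : Tab μ r) : ℤˣ :=
  Perm.sign (T.trans T₀.symm : Perm (Cell μ))

theorem tabSign_trans (T₀ T : Tab μ r) (π : Perm (Cell μ)) :
    tabSign T₀ (π.trans T) = Perm.sign π * tabSign T₀ T := by
  rw [tabSign, tabSign, mul_comm, ← Perm.sign_mul]
  rfl

theorem grSub_le_garnirSub (kk : ℕ → ℕ) : grSub K μ r kk ≤ garnirSub K μ r :=
  Submodule.span_mono fun _ ⟨T, c, hc, hk, hx⟩ => ⟨T, c, hc, kk c, hk, hx⟩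

theorem garnirSub_eq_iSup_grSub : garnirSub K μ r = ⨆ k, grSub K μ r fun _ => k :=
  le_antisymm
    (Submodule.span_le.2 fun _ ⟨T, c, hc, k, hk, hx⟩ =>
      Submodule.mem_iSup_of_mem k (Submodule.subset_span ⟨T, c, hc, hk, hx⟩))
    (iSup_le fun _ => grSub_le_garnirSub _)

theorem IsTabAction.garnirSub_le_comap
    {ρ : Perm (Fin r) → (MLam K μ r →ₗ[K] MLam K μ r)} (hρ : IsTabAction K μ r ρ)
    (σ : Perm (Fin r)) : garnirSub K μ r ≤ (garnirSub K μ r).comap (ρ σ) := by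
  refine Submodule.span_le.2 ?_
  rintro _ ⟨T, c, hc, k, hk, rfl⟩
  refine Submodule.subset_span ⟨T.trans σ, c, hc, k, hk, ?_⟩
  simp only [garnirElt, map_sub, map_sum, hρ σ]
  rfl

theorem isQuotIso_iff_eq_of_le {G M : Type} [AddCommGroup M] [Module K M] [Module.Finite K M]
    {N₁ N₂ : Submodule K M} {ρ : G → M →ₗ[K] M} (hle : N₁ ≤ N₂)
    (hρ : ∀ g, N₂ ≤ N₂.comap (ρ g)) : IsQuotIso K N₁ N₂ ρ ρ ↔ N₁ = N₂ := by
  constructor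
  · rintro ⟨e, -⟩
    refine Submodule.eq_of_le_of_finrank_eq hle ?_
    have h₁ := Submodule.finrank_quotient_add_finrank N₁
    have h₂ := Submodule.finrank_quotient_add_finrank N₂
    have he := e.finrank_eq
    omega
  · rintro rfl
    refine ⟨LinearEquiv.refl K _, fun g x y hxy => ?_⟩
    rw [LinearEquiv.refl_apply, Submodule.Quotient.eq] at hxy ⊢
    rw [← map_sub]
    exact hρ g hxy

end Tabloids

section TwoColumns

open Finset Equiv

variable {K : Type} [Field K] {V : Type*} [AddCommGroup V] [Module K V] {μ : Fin 2 → ℕ} {r k : ℕ}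
  {T₀ T T' : Tab μ r} {f : Finset (Fin r) → V} {φ : MLam K μ r →ₗ[K] V}

theorem colEntries_zero : colEntries T 0 = (colEntries T 1)ᶜ := by
  ext y
  obtain ⟨x, rfl⟩ := T.surjective y
  rw [mem_compl, apply_mem_colEntries_iff, apply_mem_colEntries_iff]
  omega

theorem fst_trans_symm_apply (h : colEntries T 1 = colEntries T' 1) (x : Cell μ) :
    ((T.trans T'.symm) x).1 = x.1 := by
  have hiff : ((T.trans T'.symm) x).1 = 1 ↔ x.1 = 1 := by
    rw [← apply_mem_colEntries_iff (T := T'), ← h, trans_apply, apply_symm_apply,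
      apply_mem_colEntries_iff]
  omega

/-- On column tabloids, the linear map `φ` is given by the function `f` of the set of entries of
the second column, up to the sign of the tableau with respect to `T₀`. -/
def Represents (T₀ : Tab μ r) (f : Finset (Fin r) → V) (φ : MLam K μ r →ₗ[K] V) : Prop :=
  ∀ T, φ (tabloid K μ r T) = tabSign T₀ T • f (colEntries T 1)

theorem exists_represents (T₀ : Tab μ r) (φ : MLam K μ r →ₗ[K] V) :
    ∃ f, Represents T₀ f φ := by
  have hfactors : Function.FactorsThrough (fun T => tabSign T₀ T • φ (tabloid K μ r T))
      fun T => colEntries T 1 := fun T T' h => by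
    have hT : T = (T.trans T'.symm : Perm (Cell μ)).trans T' := by ext; simp
    have htab := tabloid_trans_of_forall_fst_eq (K := K) (fst_trans_symm_apply h) T'
    have hsign := tabSign_trans T₀ T' (T.trans T'.symm)
    rw [← hT] at htab hsign
    beta_reduce
    rw [htab, hsign, LinearMap.map_smul_of_tower, mul_comm, smul_smul, mul_assoc,
      Int.units_mul_self, mul_one]
  obtain ⟨f, hf⟩ := (Function.factorsThrough_iff _).1 hfactors
  refine ⟨f, fun T => ?_⟩
  rw [show f (colEntries T 1) = _ from (congrFun hf T).symm, smul_smul, Int.units_mul_self,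
    one_smul]

theorem exists_linearMap_represents (T₀ : Tab μ r) (f : Finset (Fin r) → V) :
    ∃ φ : MLam K μ r →ₗ[K] V, Represents T₀ f φ := by
  let ψ : FreeTab K μ r →ₗ[K] V :=
    Finsupp.linearCombination K fun T => tabSign T₀ T • f (colEntries T 1)
  have hψ : colRel K μ r ≤ LinearMap.ker ψ := by
    refine Submodule.span_le.2 ?_
    rintro _ ⟨T, c, i, j, hij, rfl⟩
    have hne : (⟨c, i⟩ : Cell μ) ≠ ⟨c, j⟩ := by simpa using hij
    simp only [SetLike.mem_coe, LinearMap.mem_ker, map_add, ψ, Finsupp.linearCombination_single,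
      one_smul, tabSign_trans, Perm.sign_swap hne, neg_mul, one_mul, Units.neg_smul,
      colEntries_trans_of_forall_fst_eq (apply_swap_eq_self (v := Sigma.fst) (i := ⟨c, i⟩)
        (j := ⟨c, j⟩) rfl), add_neg_cancel]
  refine ⟨(colRel K μ r).liftQ ψ hψ, fun T => ?_⟩
  exact ((colRel K μ r).liftQ_apply ψ _).trans (by simp [ψ])

theorem Represents.map_garnirElt (hφ : Represents T₀ f φ) (T : Tab μ r) (hc : 0 + 1 < 2)
    (hk : k ≤ μ 1) :
    φ (garnirElt K μ r T 0 hc k hk) = tabSign T₀ T • (f (colEntries T 1) - (-1 : ℤ) ^ k •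
      ∑ A ∈ powersetCard k (colEntries T 1)ᶜ,
        f ((colEntries T 1 \ topEntries T 1 k) ∪ A)) := by
  have hexch : ∀ A (hA : #A = k), φ (tabloid K μ r ((exchPerm μ 0 hc k hk A hA).trans T)) =
      tabSign T₀ T • (-1 : ℤ) ^ k •
        f ((colEntries T 1 \ topEntries T 1 k) ∪ A.map (colEmb T 0)) := fun A hA => by
    have hcol : colEntries ((exchPerm μ 0 hc k hk A hA).trans T) 1 = _ :=
      colEntries_exchPerm_trans
    rw [hφ, hcol, tabSign_trans, sign_exchPerm, mul_comm, mul_smul]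
    simp only [Units.smul_def, Units.val_pow_eq_pow_val, Units.val_neg, Units.val_one]
    rfl
  rw [garnirElt, map_sub, map_sum, hφ, smul_sub, ← colEntries_zero,
    show colEntries T 0 = univ.map (colEmb T 0) from rfl, powersetCard_map, sum_map, smul_sum,
    smul_sum, ← sum_attach (powersetCard k univ)]
  simp only [hexch]
  rfl

theorem Represents.map_garnirElt_eq_zero_iff (hφ : Represents T₀ f φ) (T : Tab μ r)
    (hc : 0 + 1 < 2) (hk : k ≤ μ 1) : φ (garnirElt K μ r T 0 hc k hk) = 0 ↔
      f (colEntries T 1) = (-1 : ℤ) ^ k • ∑ A ∈ powersetCard k (colEntries T 1)ᶜ,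
        f ((colEntries T 1 \ topEntries T 1 k) ∪ A) := by
  rw [hφ.map_garnirElt, smul_eq_zero_iff_eq, sub_eq_zero]

theorem Represents.grSub_le_ker_iff (hφ : Represents T₀ f φ) (hr : r = μ 0 + μ 1) :
    grSub K μ r (fun _ => k) ≤ LinearMap.ker φ ↔ IsGarnir f (μ 1) k := by
  rw [grSub, Submodule.span_le]
  constructor
  · intro h Z hZ B hB
    obtain ⟨hBZ, hBk⟩ := mem_powersetCard.1 hB
    have hZB : Disjoint Z B := disjoint_compl_right.mono_right hBZ
    have hk : k ≤ μ 1 := by omega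
    obtain ⟨T, hT, hTop⟩ := exists_tab_colEntries_eq_union_and_topEntries_eq
      (hr.trans (Fin.sum_univ_two μ).symm) hZB hZ hBk
    have hzero := (hφ.map_garnirElt_eq_zero_iff T one_lt_two hk).1
      (h ⟨T, 0, one_lt_two, hk, rfl⟩)
    rwa [hT, hTop, union_sdiff_cancel_right hZB, compl_union, ← sdiff_eq_inter_compl] at hzero
  · rintro hf _ ⟨T, c, hc, hk, rfl⟩
    obtain rfl : c = 0 := by omega
    have hgarnir : f (colEntries T 1 \ topEntries T 1 k ∪ topEntries T 1 k) = _ := hf _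
      (card_colEntries_sdiff_topEntries_add hk) (topEntries T 1 k)
      (mem_powersetCard.2 ⟨fun x hx => by simp [hx], card_topEntries hk⟩)
    refine (hφ.map_garnirElt_eq_zero_iff T hc hk).2 ?_
    rwa [sdiff_eq_inter_compl (_)ᶜ, ← compl_union,
      sdiff_union_of_subset topEntries_subset_colEntries] at hgarnir

theorem Represents.garnirSub_le_ker_iff (hφ : Represents T₀ f φ) (hr : r = μ 0 + μ 1) :
    garnirSub K μ r ≤ LinearMap.ker φ ↔ ∀ l, IsGarnir f (μ 1) l := by
  simp only [garnirSub_eq_iSup_grSub, iSup_le_iff, hφ.grSub_le_ker_iff hr]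

theorem grSub_eq_garnirSub [CharZero K] (hr : r = μ 0 + μ 1) (hk1 : 1 ≤ k) (hkb : k ≤ μ 1)
    (hka : k = 1 ∨ k < μ 0) : grSub K μ r (fun _ => k) = garnirSub K μ r := by
  refine le_antisymm (grSub_le_garnirSub _) ?_
  let φ := (grSub K μ r fun _ => k).mkQ
  let T₀ : Tab μ r := Fintype.equivFinOfCardEq (by simp [hr])
  obtain ⟨f, hf⟩ := exists_represents T₀ φ
  have : IsAddTorsionFree (MLam K μ r ⧸ grSub K μ r fun _ => k) := .of_isTorsionFree K _
  have hgarnir : IsGarnir f (μ 1) k := (hf.grSub_le_ker_iff hr).1 (Submodule.ker_mkQ _).ge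
  rw [← Submodule.ker_mkQ (grSub K μ r fun _ => k), hf.garnirSub_le_ker_iff hr]
  exact hgarnir.of_isGarnir ((Fintype.card_fin r).trans hr) hk1 hkb hka

theorem grSub_ne_garnirSub (hr : r = μ 0 + μ 1) (hk : 2 ≤ k) (h0 : μ 0 = k) (h1 : μ 1 = k) :
    grSub K μ r (fun _ => k) ≠ garnirSub K μ r := by
  intro heq
  let T₀ : Tab μ r := Fintype.equivFinOfCardEq (by simp [hr])
  obtain ⟨f, hf, hf1⟩ := exists_isGarnir_self_not_isGarnir_one (α := Fin r) (V := K) (k := k)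
    (by rw [Fintype.card_fin]; omega) hk
  obtain ⟨φ, hφ⟩ := exists_linearMap_represents (K := K) T₀ f
  rw [← h1] at hf hf1
  refine hf1 ((hφ.garnirSub_le_ker_iff hr).1 ?_ 1)
  rw [← heq, ← h1]
  exact (hφ.grSub_le_ker_iff hr).2 hf

theorem grSub_eq_garnirSub_iff [CharZero K] (hr : r = μ 0 + μ 1) (hk1 : 1 ≤ k) (hkb : k ≤ μ 1)
    (hba : μ 1 ≤ μ 0) : grSub K μ r (fun _ => k) = garnirSub K μ r ↔ k = 1 ∨ k < μ 0 := by
  refine ⟨fun heq => ?_, grSub_eq_garnirSub hr hk1 hkb⟩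
  by_contra hcon
  exact grSub_ne_garnirSub hr (by omega) (by omega) (by omega) heq

end TwoColumns

/-- Theorem 6.4(1) of the paper: let `λ` be a partition of `r` with conjugate
`μ = (μ₁, μ₂)` (so `λ` has two columns of lengths `μ₁ ≥ μ₂`) and let `1 ≤ k ≤ μ₂`. Then
`M^λ / GR^λ(k) ≅ S^λ` as `𝔖_r`-modules iff `μ₁ > k`, or `μ₁ = μ₂ = k = 1`. -/
theorem statement15 (K : Type) [Field K] [CharZero K] (μ₁ μ₂ k : ℕ)
    (hba : μ₂ ≤ μ₁) (hk1 : 1 ≤ k) (hkb : k ≤ μ₂) (r : ℕ) (hr : r = μ₁ + μ₂)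
    (ρ : Equiv.Perm (Fin r) → (MLam K ![μ₁, μ₂] r →ₗ[K] MLam K ![μ₁, μ₂] r))
    (hρ : IsTabAction K ![μ₁, μ₂] r ρ) :
    IsQuotIso K (grSub K ![μ₁, μ₂] r (fun _ => k)) (garnirSub K ![μ₁, μ₂] r) ρ ρ ↔
      (k < μ₁ ∨ (μ₁ = 1 ∧ μ₂ = 1 ∧ k = 1)) := by
  rw [isQuotIso_iff_eq_of_le (grSub_le_garnirSub _) hρ.garnirSub_le_comap,
    grSub_eq_garnirSub_iff hr hk1 hkb hba]
  change k = 1 ∨ k < μ₁ ↔ _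
  omega

end Specht
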